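/- The operators L̃¹_n := (1/2) L^{1/2}_{2n} + (1/32) δ_{n,0} · id_F on the neutral fermion Fock space F satisfy the Virasoro relations with central charge 1: for all m, n ∈ ℤ, L̃¹_m ∘ L̃¹_n − L̃¹_n ∘ L̃¹_m = (m−n) L̃¹_{m+n} + δ_{m,−n} · ((m³−m)/12) · id_F. (These are the modes of the 2-point-local Virasoro field L̃¹(z²) = (1/(8z²))(:∂_z φ^D(z) φ^D(z): + :∂_{−z} φ^D(−z) φ^D(−z):) + 1/(32z⁴) of central charge 1 on F^{⊗1/2}.) -/

import Mathlib

noncomputable section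

/-- The neutral fermion Fock space `F = F^{⊗1/2}`: the complex vector space with
basis `{e_S : S a finite subset of ℕ}`. -/
abbrev FockD : Type := Finset ℕ →₀ ℂ

/-- Basis vector `e_S`. -/
def eD (S : Finset ℕ) : FockD := Finsupp.single S 1

/-- Action of the fermion mode `a_m` on the basis vector `e_S`. -/
def aVec (m : ℤ) (S : Finset ℕ) : FockD :=
  if 0 ≤ m then
    if m.toNat ∈ S then 0
    else ((-1 : ℂ) ^ (S.filter (fun s => m.toNat < s)).card) • eD (insert m.toNat S)
  else
    if (-m - 1).toNat ∈ S then
      ((-1 : ℂ) ^ (S.filter (fun s => (-m - 1).toNat < s)).card) • eD (S.erase ((-m - 1).toNat))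
    else 0

/-- The fermion mode `a_m` as a linear operator on `F`. -/
def aOp (m : ℤ) : FockD →ₗ[ℂ] FockD :=
  Finsupp.lsum ℂ fun S => LinearMap.toSpanSingleton ℂ FockD (aVec m S)

/-- Fermionic normal ordered product `:a_i a_j:`. -/
def NO (i j : ℤ) : FockD →ₗ[ℂ] FockD :=
  if 0 ≤ i then (aOp i).comp (aOp j) else -((aOp j).comp (aOp i))

/-- Heisenberg operator `h_n = (1/2) ∑_{i∈ℤ} (−1)^{i+1} :a_i a_{−2n−1−i}:`
(on each vector only finitely many summands are nonzero). -/
def hD (n : ℤ) (x : FockD) : FockD :=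
  (1 / 2 : ℂ) • ∑ᶠ i : ℤ, ((-1 : ℂ) ^ (i + 1)) • NO i (-2 * n - 1 - i) x

/-- Virasoro operator `L^{1/2}_m = (1/2) ∑_{i∈ℤ} i · :a_i a_{−m−i−1}:`. -/
def LhalfD (m : ℤ) (x : FockD) : FockD :=
  (1 / 2 : ℂ) • ∑ᶠ i : ℤ, (i : ℂ) • NO i (-m - i - 1) x

/-- 2-point Virasoro operator `L¹_n = (1/2) ∑_{j∈ℤ} :h_j h_{n−j}:`, where the bosonic
normal ordered product is `:h_j h_k: = h_j h_k` if `j ≤ k` and `h_k h_j` otherwise. -/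
def L1D (n : ℤ) (x : FockD) : FockD :=
  (1 / 2 : ℂ) • ∑ᶠ j : ℤ, if j ≤ n - j then hD j (hD (n - j) x) else hD (n - j) (hD j x)

/-- Charge `c(S) = #{s ∈ S : s odd} − #{s ∈ S : s even}`. -/
def chg (S : Finset ℕ) : ℤ :=
  ((S.filter fun s => Odd s).card : ℤ) - ((S.filter fun s => Even s).card : ℤ)

/-- Charge-`n` component `F_{(n)}`: the span of the `e_S` with `c(S) = n`. -/
def FockComp (n : ℤ) : Submodule ℂ FockD :=
  Submodule.span ℂ {x : FockD | ∃ S : Finset ℕ, chg S = n ∧ x = eD S}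

/-- Index set of the vacuum-like vector `v_n`. -/
def vSet (n : ℤ) : Finset ℕ :=
  if 0 ≤ n then (Finset.range n.toNat).image fun i => 2 * i + 1
  else (Finset.range (-n).toNat).image fun i => 2 * i

/-- Vacuum-like vector `v_n` (`v_0 = e_∅`, `v_n = e_{{1,3,…,2n−1}}`,
`v_{−n} = e_{{0,2,…,2n−2}}` for `n > 0`). -/
def vD (n : ℤ) : FockD := eD (vSet n)

/-- The operators `L̃¹_n := (1/2) L^{1/2}_{2n} + (1/32) δ_{n,0} id_F`. -/
def Ltilde1 (n : ℤ) (x : FockD) : FockD :=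
  (1 / 2 : ℂ) • LhalfD (2 * n) x + (if n = 0 then (1 / 32 : ℂ) else 0) • x

/-- sign -/
def sg (t : ℕ) (S : Finset ℕ) : ℂ := (-1 : ℂ) ^ (S.filter (fun s => t < s)).card

lemma sg_insert (t u : ℕ) (S : Finset ℕ) (h : u ∉ S) :
    sg t (insert u S) = if t < u then - sg t S else sg t S := by
  unfold sg
  rw [Finset.filter_insert]
  split_ifs with h1
  · rw [Finset.card_insert_of_notMem (by simp [h]), pow_succ]; ring
  · rfl

lemma sg_erase (t u : ℕ) (S : Finset ℕ) (h : u ∈ S) :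
    sg t (S.erase u) = if t < u then - sg t S else sg t S := by
  have h2 := sg_insert t u (S.erase u) (by simp)
  rw [Finset.insert_erase h] at h2
  rw [h2]; split_ifs <;> simp

lemma sg_mul_self (t : ℕ) (S : Finset ℕ) : sg t S * sg t S = 1 := by
  unfold sg; rw [← mul_pow]; simp

lemma aOp_eD (m : ℤ) (S : Finset ℕ) : aOp m (eD S) = aVec m S := by
  simp [aOp, eD]

lemma cre_eD (t : ℕ) (S : Finset ℕ) :
    aOp (t : ℤ) (eD S) = if t ∈ S then 0 else sg t S • eD (insert t S) := by
  rw [aOp_eD]; simp [aVec, sg]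

lemma ann_eD (t : ℕ) (S : Finset ℕ) :
    aOp (-(t : ℤ) - 1) (eD S) = if t ∈ S then sg t S • eD (S.erase t) else 0 := by
  rw [aOp_eD]
  have h : ¬ (0 ≤ -(t : ℤ) - 1) := by omega
  have h2 : (-(-(t : ℤ) - 1) - 1).toNat = t := by omega
  rw [aVec, if_neg h, h2]; rfl

lemma lin_ext {f g : FockD →ₗ[ℂ] FockD} (h : ∀ S, f (eD S) = g (eD S)) : f = g := by
  apply Finsupp.lhom_ext'
  intro S
  ext1
  exact h S

lemma int_cases' (m : ℤ) : (∃ t : ℕ, m = t) ∨ (∃ t : ℕ, m = -(t : ℤ) - 1) := by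
  rcases lt_or_ge m 0 with h | h
  · right; exact ⟨(-m - 1).toNat, by omega⟩
  · left; exact ⟨m.toNat, by omega⟩

lemma anti_cc (t u : ℕ) (S : Finset ℕ) :
    aOp (t : ℤ) (aOp (u : ℤ) (eD S)) + aOp (u : ℤ) (aOp (t : ℤ) (eD S)) = 0 := by
  rcases lt_trichotomy t u with h | h | h
  · by_cases ht : t ∈ S <;> by_cases hu : u ∈ S <;>
      simp [cre_eD, ht, hu, sg_insert, h, h.ne, h.ne', h.not_gt, smul_smul,
        Finset.insert_comm t u, mul_comm]
  · subst h
    by_cases ht : t ∈ S <;> simp [cre_eD, ht]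
  · by_cases ht : t ∈ S <;> by_cases hu : u ∈ S <;>
      simp [cre_eD, ht, hu, sg_insert, h, h.ne, h.ne', h.not_gt, smul_smul,
        Finset.insert_comm t u, mul_comm]

lemma anti_dd (t u : ℕ) (S : Finset ℕ) :
    aOp (-(t : ℤ) - 1) (aOp (-(u : ℤ) - 1) (eD S)) +
      aOp (-(u : ℤ) - 1) (aOp (-(t : ℤ) - 1) (eD S)) = 0 := by
  rcases lt_trichotomy t u with h | h | h
  · by_cases ht : t ∈ S <;> by_cases hu : u ∈ S <;>
      simp [ann_eD, ht, hu, sg_erase, h, h.ne, h.ne', h.not_gt, smul_smul,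
        Finset.erase_right_comm (a := t) (b := u), mul_comm]
  · subst h
    by_cases ht : t ∈ S <;> simp [ann_eD, ht]
  · by_cases ht : t ∈ S <;> by_cases hu : u ∈ S <;>
      simp [ann_eD, ht, hu, sg_erase, h, h.ne, h.ne', h.not_gt, smul_smul,
        Finset.erase_right_comm (a := t) (b := u), mul_comm]

lemma anti_cd (t u : ℕ) (S : Finset ℕ) :
    aOp (t : ℤ) (aOp (-(u : ℤ) - 1) (eD S)) +
      aOp (-(u : ℤ) - 1) (aOp (t : ℤ) (eD S)) = if t = u then eD S else 0 := by
  rcases lt_trichotomy t u with h | h | h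
  · by_cases ht : t ∈ S <;> by_cases hu : u ∈ S <;>
      simp [cre_eD, ann_eD, ht, hu, sg_erase, sg_insert, h, h.ne, h.ne', h.not_gt, smul_smul,
        Finset.erase_insert_of_ne h.ne, mul_comm]
  · subst h
    by_cases ht : t ∈ S <;> simp [cre_eD, ann_eD, ht, sg_erase, sg_insert, smul_smul, sg_mul_self]
  · by_cases ht : t ∈ S <;> by_cases hu : u ∈ S <;>
      simp [cre_eD, ann_eD, ht, hu, sg_erase, sg_insert, h, h.ne, h.ne', h.not_gt, smul_smul,
        Finset.erase_insert_of_ne h.ne', mul_comm]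

lemma anti_eD (i j : ℤ) (S : Finset ℕ) :
    aOp i (aOp j (eD S)) + aOp j (aOp i (eD S)) = if i + j = -1 then eD S else 0 := by
  rcases int_cases' i with ⟨t, rfl⟩ | ⟨t, rfl⟩ <;> rcases int_cases' j with ⟨u, rfl⟩ | ⟨u, rfl⟩
  · rw [anti_cc, if_neg (by omega)]
  · rw [anti_cd]; congr 1; apply propext; omega
  · rw [add_comm, anti_cd]; congr 1; apply propext; omega
  · rw [anti_dd, if_neg (by omega)]

lemma anti (i j : ℤ) (x : FockD) :
    aOp i (aOp j x) + aOp j (aOp i x) = if i + j = -1 then x else 0 := by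
  have : (aOp i).comp (aOp j) + (aOp j).comp (aOp i)
      = (if i + j = -1 then LinearMap.id else 0) := by
    apply lin_ext
    intro S
    have := anti_eD i j S
    split_ifs at this ⊢ <;> simpa using this
  have := LinearMap.congr_fun this x
  split_ifs at this ⊢ <;> simpa using this

/-- local finiteness -/
lemma loc_fin (x : FockD) : ∃ N : ℕ, ∀ k : ℤ, k < -(N : ℤ) → aOp k x = 0 := by
  induction x using Finsupp.induction_linear with
  | zero => exact ⟨0, by simp⟩
  | add f g hf hg =>
    obtain ⟨N, hN⟩ := hf
    obtain ⟨M, hM⟩ := hg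
    refine ⟨max N M, fun k hk => ?_⟩
    rw [map_add, hN k (by omega), hM k (by omega), add_zero]
  | single S c =>
    refine ⟨S.sup id + 1, fun k hk => ?_⟩
    have : Finsupp.single S c = c • eD S := by simp [eD]
    rw [this, map_smul]
    obtain ⟨t, rfl⟩ | ⟨t, rfl⟩ := int_cases' k
    · omega
    · rw [ann_eD, if_neg, smul_zero]
      intro ht
      have : t ≤ S.sup id := Finset.le_sup (f := id) ht
      push_cast at hk
      omega

lemma supp_fin (m : ℤ) (x : FockD) :
    (Function.support fun i : ℤ => (i : ℂ) • NO i (-m - i - 1) x).Finite := by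
  obtain ⟨N, hN⟩ := loc_fin x
  apply (Set.finite_Icc (-(N : ℤ)) (N - m)).subset
  intro i hi
  by_contra h
  apply hi
  rw [Set.mem_Icc, not_and_or] at h
  have : NO i (-m - i - 1) x = 0 := by
    unfold NO
    split_ifs with h0
    · have : aOp (-m - i - 1) x = 0 := hN _ (by omega)
      simp [this]
    · rcases h with h | h
      · have : aOp i x = 0 := hN _ (by omega)
        simp [this]
      · have h1 := anti i (-m - i - 1) x
        have h2 : aOp (-m - i - 1) x = 0 := hN _ (by omega)
        rw [h2, map_zero, zero_add] at h1
        have h3 : aOp i x = 0 ∨ i ≥ -(N : ℤ) := by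
          by_cases h4 : i < -(N : ℤ)
          · exact Or.inl (hN _ h4)
          · exact Or.inr (by omega)
        rcases h3 with h3 | h3
        · simp [h3]
        · by_cases hm : m = 0
          · subst hm; omega
          · rw [if_neg (by omega)] at h1
            simp [h1]
  simp [this]

/-- linear version -/
def LL (m : ℤ) : FockD →ₗ[ℂ] FockD where
  toFun := LhalfD m
  map_add' x y := by
    unfold LhalfD
    rw [← smul_add, ← finsum_add_distrib (supp_fin m x) (supp_fin m y)]
    simp
  map_smul' c x := by
    unfold LhalfD
    rw [RingHom.id_apply, smul_comm c, smul_finsum c]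
    congr 2; ext1 i
    rw [map_smul, smul_comm c]

lemma LL_apply (m : ℤ) (x : FockD) : LL m x = LhalfD m x := rfl

lemma map_LL {V : Type*} [AddCommGroup V] [Module ℂ V] (f : FockD →ₗ[ℂ] V) (m : ℤ) (x : FockD) :
    f (LL m x) = (1 / 2 : ℂ) • ∑ᶠ i : ℤ, (i : ℂ) • f (NO i (-m - i - 1) x) := by
  rw [LL_apply, LhalfD, map_smul]
  have h := f.toAddMonoidHom.map_finsum (supp_fin m x)
  simp only [LinearMap.toAddMonoidHom_coe, map_smul] at h
  rw [h]

lemma NO_comm (i j k : ℤ) (x : FockD) :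
    NO i j (aOp k x) - aOp k (NO i j x) =
      (if j + k = -1 then aOp i x else 0) - (if i + k = -1 then aOp j x else 0) := by
  have h1 := anti j k x
  have h2 := anti i k x
  have h3 := anti i k (aOp j x)
  have h4 := anti j k (aOp i x)
  have e1 : aOp j (aOp k x) = (if j + k = -1 then x else 0) - aOp k (aOp j x) := by
    rw [← h1]; abel
  have e2 : aOp i (aOp k x) = (if i + k = -1 then x else 0) - aOp k (aOp i x) := by
    rw [← h2]; abel
  have e3 : aOp i (aOp k (aOp j x)) = (if i + k = -1 then aOp j x else 0)
      - aOp k (aOp i (aOp j x)) := by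
    rw [← h3]; abel
  have e4 : aOp j (aOp k (aOp i x)) = (if j + k = -1 then aOp i x else 0)
      - aOp k (aOp j (aOp i x)) := by
    rw [← h4]; abel
  have f1 : aOp i (if j + k = -1 then x else 0) = if j + k = -1 then aOp i x else 0 := by
    split_ifs <;> simp
  have f2 : aOp j (if i + k = -1 then x else 0) = if i + k = -1 then aOp j x else 0 := by
    split_ifs <;> simp
  unfold NO
  by_cases h0 : 0 ≤ i
  · simp only [if_pos h0, LinearMap.comp_apply]
    rw [e1, map_sub, e3, f1]; abel
  · simp only [if_neg h0, LinearMap.comp_apply, LinearMap.neg_apply, map_neg]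
    rw [e2, map_sub, e4, f2]; abel

lemma comm_LL (m k : ℤ) (x : FockD) :
    LL m (aOp k x) - aOp k (LL m x) = ((k : ℂ) + (1 - m) / 2) • aOp (k - m) x := by
  rw [map_LL, LL_apply, LhalfD, ← smul_sub, ← finsum_sub_distrib (supp_fin m _)]
  swap
  · apply (supp_fin m x).subset
    intro i hi h
    apply hi
    simp only at h ⊢
    rw [← map_smul, h, map_zero]
  have : ∀ i : ℤ, (i : ℂ) • NO i (-m - i - 1) (aOp k x) - (i : ℂ) • aOp k (NO i (-m - i - 1) x)
      = (if i = k - m then ((k : ℂ) - m) • aOp (k - m) x else 0)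
        + (if i = -1 - k then ((k : ℂ) + 1) • aOp (k - m) x else 0) := by
    intro i
    rw [← smul_sub, NO_comm, smul_sub, sub_eq_add_neg]
    congr 1
    · by_cases h : i = k - m
      · rw [if_pos (by omega), if_pos h, h]; push_cast; rfl
      · rw [if_neg (by omega), if_neg h, smul_zero]
    · by_cases h : i = -1 - k
      · rw [if_pos (by omega), if_pos h, h]; push_cast
        rw [← neg_smul]; congr 2
        · ring
        · ring
      · rw [if_neg (by omega), if_neg h, smul_zero, neg_zero]
  simp only [this]
  rw [finsum_add_distrib, finsum_eq_single _ (k - m), finsum_eq_single _ (-1 - k)]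
  · simp only [if_true, ← add_smul, smul_smul]
    congr 1; ring
  · intro i hi; simp [hi]
  · intro i hi; simp [hi]
  · apply (Set.finite_singleton (k - m)).subset
    intro i hi; by_contra h; apply hi; simp at h; simp [h]
  · apply (Set.finite_singleton (-1 - k)).subset
    intro i hi; by_contra h; apply hi; simp at h; simp [h]

/-- scalar principle -/
lemma commutant (D : FockD →ₗ[ℂ] FockD) (h : ∀ k x, D (aOp k x) = aOp k (D x)) (x : FockD) :
    D x = (D (eD ∅) ∅) • x := by
  have key : ∀ (t : ℕ) (y : FockD) (S : Finset ℕ), t ∈ S →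
      (aOp t (aOp (-(t : ℤ) - 1) y)) S = y S := by
    intro t y S hS
    have : (Finsupp.lapply S).comp ((aOp t).comp (aOp (-(t : ℤ) - 1)))
        = (Finsupp.lapply S : FockD →ₗ[ℂ] ℂ) := by
      apply Finsupp.lhom_ext'
      intro T
      ext1
      change (aOp t (aOp (-(t : ℤ) - 1) (eD T))) S = (eD T) S
      by_cases hT : t ∈ T
      · simp [ann_eD, cre_eD, hT, smul_smul, sg_erase, sg_mul_self]
      · have : T ≠ S := by rintro rfl; exact hT hS
        rw [ann_eD, if_neg hT]; simp [eD, this]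
    exact LinearMap.congr_fun this y
  have hv : D (eD ∅) = (D (eD ∅) ∅) • eD ∅ := by
    ext S
    rcases S.eq_empty_or_nonempty with rfl | ⟨t, ht⟩
    · simp [eD]
    · rw [← key t _ S ht, ← h, ann_eD]
      have : ∅ ≠ S := by rintro rfl; simp at ht
      simp [eD, this]
  have : D = (D (eD ∅) ∅) • LinearMap.id := by
    apply lin_ext
    intro S
    induction S using Finset.induction_on with
    | empty => simpa using hv
    | insert t S ht ih =>
      have : eD (insert t S) = sg t S • aOp t (eD S) := by
        rw [cre_eD, if_neg ht, smul_smul, sg_mul_self, one_smul]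
      rw [this, map_smul, h, ih]
      simp [smul_smul, mul_comm]
  exact LinearMap.congr_fun this x

/-- vacuum functional -/
def om : FockD →ₗ[ℂ] ℂ := Finsupp.lapply ∅

lemma om_cre (k : ℤ) (hk : 0 ≤ k) (x : FockD) : om (aOp k x) = 0 := by
  lift k to ℕ using hk
  have : om.comp (aOp k) = 0 := by
    apply Finsupp.lhom_ext'
    intro T
    ext1
    change om (aOp k (eD T)) = 0
    rw [cre_eD]
    split_ifs
    · simp
    · simp [om, eD]
  exact LinearMap.congr_fun this x

lemma ann_vac (k : ℤ) (hk : k < 0) : aOp k (eD ∅) = 0 := by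
  obtain ⟨t, rfl⟩ | ⟨t, rfl⟩ := int_cases' k
  · omega
  · simp [ann_eD]

lemma om_vac : om (eD ∅) = 1 := by simp [om, eD]

lemma LL_vac (m : ℤ) (hm : 0 ≤ m) : LL m (eD ∅) = 0 := by
  rw [LL_apply, LhalfD]
  have : ∀ i : ℤ, (i : ℂ) • NO i (-m - i - 1) (eD ∅) = 0 := by
    intro i
    unfold NO
    split_ifs with h
    · simp [ann_vac (-m - i - 1) (by omega)]
    · simp [ann_vac i (by omega)]
  simp [this]

lemma om_LL (m : ℤ) (hm : m < 0) (x : FockD) : om (LL m x) = 0 := by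
  rw [map_LL]
  have : ∀ i : ℤ, (i : ℂ) • om (NO i (-m - i - 1) x) = 0 := by
    intro i
    unfold NO
    split_ifs with h
    · simp [om_cre i h]
    · simp [om_cre (-m - i - 1) (by omega)]
  rw [finsum_congr this]; simp

lemma om_LL_vac (m : ℤ) : om (LL m (eD ∅)) = 0 := by
  rcases lt_or_ge m 0 with h | h
  · exact om_LL m h _
  · rw [LL_vac m h, map_zero]

lemma om_pair (i j : ℤ) (hj : 0 ≤ j) :
    om (aOp i (aOp j (eD ∅))) = if i + j = -1 then 1 else 0 := by
  rcases lt_or_ge i 0 with h | h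
  · have := congrArg om (anti i j (eD ∅))
    rw [ann_vac i h, map_zero, add_zero] at this
    rw [this]
    split_ifs
    · exact om_vac
    · simp
  · rw [om_cre i h, if_neg (by omega)]

lemma sum_formula (c : ℂ) (M : ℕ) : ∑ i ∈ Finset.range M, (i : ℂ) * ((i : ℂ) + (1 - c) / 2) =
    (M : ℂ) * (M - 1) * (2 * M - 1) / 6 + (1 - c) / 2 * (M * (M - 1) / 2) := by
  induction M with
  | zero => simp
  | succ n ih => rw [Finset.sum_range_succ, ih]; push_cast; ring

lemma om_LL_LL (m n : ℤ) (hm : 0 ≤ m) (hn : n < 0) :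
    om (LL m (LL n (eD ∅))) = if m = -n then ((m : ℂ) ^ 3 - m) / 24 else 0 := by
  have h0 := map_LL (om.comp (LL m)) n (eD ∅)
  rw [LinearMap.comp_apply] at h0
  rw [h0]
  have key : ∀ i : ℤ, (i : ℂ) • (om.comp (LL m)) (NO i (-n - i - 1) (eD ∅)) =
      if m = -n ∧ 0 ≤ i ∧ i < m then (i : ℂ) * ((i : ℂ) + (1 - m) / 2) else 0 := by
    intro i
    unfold NO
    by_cases hi : 0 ≤ i
    · rw [if_pos hi]
      by_cases hj : 0 ≤ -n - i - 1
      · have c1 := comm_LL m i (aOp (-n - i - 1) (eD ∅))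
        have c2 := comm_LL m (-n - i - 1) (eD ∅)
        rw [LL_vac m hm, map_zero, sub_zero] at c2
        rw [c2, map_smul, sub_eq_iff_eq_add] at c1
        simp only [LinearMap.comp_apply]
        rw [c1, map_add, map_smul, map_smul, om_cre i hi, om_pair _ _ hj]
        by_cases hmn : m = -n
        · rw [if_pos (by omega), if_pos (by omega)]; simp
        · rw [if_neg (by omega), if_neg (by omega)]; simp
      · rw [LinearMap.comp_apply, LinearMap.comp_apply, ann_vac (-n - i - 1) (by omega),
          if_neg (by omega)]
        simp
    · rw [if_neg hi, if_neg (by omega)]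
      simp [ann_vac i (by omega)]
  simp only [key]
  by_cases hmn : m = -n
  · rw [if_pos hmn]
    lift m to ℕ using hm
    rw [finsum_eq_sum_of_support_subset (s := (Finset.range m).map Nat.castEmbedding)]
    · rw [Finset.sum_map]
      have := sum_formula (m : ℂ) m
      rw [Finset.sum_congr rfl (g := fun i : ℕ => (i : ℂ) * ((i : ℂ) + (1 - (m : ℂ)) / 2)), this]
      · simp only [smul_eq_mul]; push_cast; ring
      · intro i hi
        rw [Finset.mem_range] at hi
        rw [if_pos ⟨hmn, by simp, by simpa using hi⟩]
        simp
    · intro i hi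
      rw [Function.mem_support] at hi
      have h3 : 0 ≤ i ∧ i < m := by
        by_contra hc
        exact hi (if_neg (fun h => hc h.2))
      simp only [Finset.coe_map, Set.mem_image, Finset.mem_coe, Finset.mem_range]
      refine ⟨i.toNat, by omega, ?_⟩
      change ((i.toNat : ℕ) : ℤ) = i
      omega
  · simp [hmn]

lemma vir (m n : ℤ) (x : FockD) :
    LL m (LL n x) - LL n (LL m x) = ((m : ℂ) - n) • LL (m + n) x +
      (if m = -n then ((m : ℂ) ^ 3 - m) / 24 else 0) • x := by
  have h := commutant ((LL m).comp (LL n) - (LL n).comp (LL m) - ((m : ℂ) - n) • LL (m + n)) (by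
    intro k x
    simp only [LinearMap.sub_apply, LinearMap.comp_apply, LinearMap.smul_apply]
    have q : ∀ m k x, LL m (aOp k x) = aOp k (LL m x) + ((k : ℂ) + (1 - m) / 2) • aOp (k - m) x :=
      fun m k x => by rw [← comm_LL]; abel
    simp only [q, map_add, map_sub, map_smul, smul_add]
    rw [show k - m - n = k - n - m by ring, show k - (m + n) = k - n - m by ring]
    push_cast
    module) x
  simp only [LinearMap.sub_apply, LinearMap.comp_apply, LinearMap.smul_apply] at h
  rw [sub_eq_iff_eq_add] at h
  rw [h, add_comm]
  congr 2
  change om (_ - _ - _) = _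
  rw [map_sub, map_sub, map_smul, om_LL_vac, smul_zero, sub_zero]
  rcases lt_or_ge m 0 with hm | hm <;> rcases lt_or_ge n 0 with hn | hn
  · rw [om_LL m hm, om_LL n hn, if_neg (by omega), sub_zero]
  · rw [om_LL m hm, om_LL_LL n m hn hm]
    by_cases hmn : m = -n
    · rw [if_pos (by omega), if_pos hmn, hmn]; push_cast; ring
    · rw [if_neg (by omega), if_neg hmn, sub_zero]
  · rw [om_LL n hn, om_LL_LL m n hm hn, sub_zero]
  · rw [LL_vac m hm, LL_vac n hn]
    by_cases hmn : m = -n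
    · have : m = 0 := by omega
      simp [this]
    · simp [hmn]

/-- The operators `L̃¹_n = (1/2) L^{1/2}_{2n} + (1/32) δ_{n,0} id_F` on the neutral fermion
Fock space satisfy the Virasoro relations with central charge `1`. -/
theorem virasoro_tilde_charge_one (m n : ℤ) (x : FockD) :
    Ltilde1 m (Ltilde1 n x) - Ltilde1 n (Ltilde1 m x)
      = ((m - n : ℤ) : ℂ) • Ltilde1 (m + n) x
        + (if m = -n then ((m ^ 3 - m : ℤ) : ℂ) / 12 else 0) • x := by
  have h := vir (2 * m) (2 * n) x
  simp only [Ltilde1, ← LL_apply, map_add, map_smul]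
  rw [sub_eq_iff_eq_add] at h
  rw [h, show 2 * (m + n) = 2 * m + 2 * n by ring]
  by_cases hmn : m = -n
  · have h2 : m + n = 0 := by omega
    rw [if_pos (by omega : 2 * m = -(2 * n)), if_pos hmn, if_pos h2]
    subst hmn
    push_cast
    module
  · rw [if_neg (by omega : ¬ 2 * m = -(2 * n)), if_neg hmn, if_neg (by omega : ¬ m + n = 0)]
    push_cast
    module
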